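/- Let R be a behavior with input-value space 𝒰 and output-value space 𝒴, U₀ ⊆ 𝒰 compact, γ ∈ 𝒦∞, and Γ a mapping from compact subsets of U₀ to subsets of 𝒴 such that: (a) for each (ω,η) ∈ R with Ω⁺[ω] ⊆ U₀, the output η is precompact; (b) for each compact U ⊆ U₀ and each (ω,η) ∈ R with Ω⁺[ω] ⊆ U, one has Ω⁺[η] ⊆ Γ(U); (c) for each compact U ⊆ U₀, |Γ(U)| ≤ γ(|U|). Then R has Cauchy gain γ on U₀ and incremental limit gain γ on U₀. Moreover, for each compact U ⊆ U₀ and each (ω,η) ∈ R with ω → U, one has η → Γ(Ω⁺[ω]); and if Γ is monotonic (U₁ ⊆ U₂ implies Γ(U₁) ⊆ Γ(U₂)), then also η → Γ(U). -/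

import Mathlib

open Filter Topology MeasureTheory
open scoped ENNReal NNReal

noncomputable def aa {M : Type*} [PseudoMetricSpace M] (ω : ℝ → M) : ℝ≥0∞ :=
  Filter.limsup (fun p : ℝ × ℝ => edist (ω p.1) (ω p.2)) (Filter.atTop ×ˢ Filter.atTop)

def KInfty (γ : ℝ≥0 → ℝ≥0) : Prop :=
  Continuous γ ∧ StrictMono γ ∧ γ 0 = 0 ∧ Filter.Tendsto γ Filter.atTop Filter.atTop

noncomputable def extK (γ : ℝ≥0 → ℝ≥0) : ℝ≥0∞ → ℝ≥0∞ :=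
  fun x => if x = ⊤ then ⊤ else ↑(γ x.toNNReal)

def CauchyGain {U Y : Type*} [PseudoMetricSpace U] [PseudoMetricSpace Y]
    (R : Set ((ℝ → U) × (ℝ → Y))) (γ : ℝ≥0 → ℝ≥0) : Prop :=
  ∀ p ∈ R, aa p.2 ≤ extK γ (aa p.1)

def IncGain {U Y : Type*} [PseudoMetricSpace U] [PseudoMetricSpace Y]
    (R : Set ((ℝ → U) × (ℝ → Y))) (κ : ℝ≥0 → ℝ≥0) : Prop :=
  ∀ p₁ ∈ R, ∀ p₂ ∈ R, ∀ u₁ u₂ : U,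
    Filter.Tendsto p₁.1 Filter.atTop (nhds u₁) → Filter.Tendsto p₂.1 Filter.atTop (nhds u₂) →
    Filter.limsup (fun t => edist (p₁.2 t) (p₂.2 t)) Filter.atTop ≤ ↑(κ (nndist u₁ u₂))

def convTo {U : Type*} [PseudoMetricSpace U] (ω : ℝ → U) (U₀ : Set U) : Prop :=
  ∀ ε > 0, ∃ T : ℝ, 0 ≤ T ∧ ∀ t ≥ T, ∃ u' ∈ U₀, dist (ω t) u' ≤ ε

def omegaLim {U : Type*} [PseudoMetricSpace U] (ω : ℝ → U) : Set U :=
  {u | ∃ t : ℕ → ℝ, Filter.Tendsto t Filter.atTop Filter.atTop ∧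
       Filter.Tendsto (fun i => ω (t i)) Filter.atTop (nhds u)}

def Precomp {U : Type*} [TopologicalSpace U] (ω : ℝ → U) : Prop :=
  ∃ K : Set U, IsCompact K ∧ ∀ t : ℝ, 0 ≤ t → ω t ∈ K

def cascade {U Y Z : Type*} (R : Set ((ℝ → U) × (ℝ → Y))) (S : Set ((ℝ → Y) × (ℝ → Z))) :
    Set ((ℝ → U) × (ℝ → Z)) :=
  {p | ∃ η : ℝ → Y, (p.1, η) ∈ R ∧ (η, p.2) ∈ S}

def CauchyGainOn {U Y : Type*} [PseudoMetricSpace U] [PseudoMetricSpace Y]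
    (R : Set ((ℝ → U) × (ℝ → Y))) (γ : ℝ≥0 → ℝ≥0) (U₀ : Set U) : Prop :=
  ∀ p ∈ R, convTo p.1 U₀ → aa p.2 ≤ extK γ (aa p.1)

def IncGainOn {U Y : Type*} [PseudoMetricSpace U] [PseudoMetricSpace Y]
    (R : Set ((ℝ → U) × (ℝ → Y))) (κ : ℝ≥0 → ℝ≥0) (U₀ : Set U) : Prop :=
  ∀ p₁ ∈ R, ∀ p₂ ∈ R, ∀ u₁ u₂ : U, u₁ ∈ U₀ → u₂ ∈ U₀ →
    Filter.Tendsto p₁.1 Filter.atTop (nhds u₁) → Filter.Tendsto p₂.1 Filter.atTop (nhds u₂) →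
    Filter.limsup (fun t => edist (p₁.2 t) (p₂.2 t)) Filter.atTop ≤ ↑(κ (nndist u₁ u₂))

def ZV {E : Type*} (X : Set E) (V : E → ℝ) : Set E := {x ∈ X | V x = 0}

def UDecrease {E 𝒰 : Type*} [NormedAddCommGroup E] [NormedSpace ℝ E] [PseudoMetricSpace 𝒰]
    (X₀ X : Set E) (f : E → 𝒰 → E) (Uset : Set 𝒰) (V : E → ℝ) : Prop :=
  (∀ x ∈ X, 0 ≤ V x) ∧ ContinuousOn V X ∧
  (∀ a b : ℝ, 0 ≤ a → a ≤ b → IsCompact {x ∈ X | a ≤ V x ∧ V x ≤ b}) ∧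
  (∀ x ∈ X, V x ≠ 0 → ∃ (W : Set E) (Vt : E → ℝ), IsOpen W ∧ x ∈ W ∧ W ⊆ X₀ ∧
    ContDiffOn ℝ 1 Vt W ∧ (∀ z ∈ W ∩ X, Vt z = V z) ∧
    ∀ u ∈ Uset, fderiv ℝ Vt x (f x u) < 0)

/-!
The asymptotic amplitude of a function and the diameter of its omega-limit set control each other:
`|Ω⁺[ω]| ≤ ‖ω‖_aa` always, with equality if `ω` is precompact. For an input/output pair `(ω, η)`
this gives `‖η‖_aa = |Ω⁺[η]| ≤ |Γ(Ω⁺[ω])| ≤ γ(|Ω⁺[ω]|) ≤ γ(‖ω‖_aa)`. For two inputs with limits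
`u₁` and `u₂`, both outputs accumulate only in `Γ({u₁, u₂})`, whose diameter is at most
`γ(d(u₁, u₂))`. A precompact output converges to every set containing its omega-limit set.
-/

section ClusterPoints

variable {ι : Type*} {l : Filter ι}

lemma limsup_comp_le_of_mapClusterPt {X β : Type*} [TopologicalSpace X] [CompleteLinearOrder β]
    {φ : X → β} (hφ : UpperSemicontinuous φ) {f : ι → X} {K : Set X} (hK : IsCompact K)
    (hf : ∀ᶠ i in l, f i ∈ K) {C : β} (hC : ∀ x ∈ K, MapClusterPt x l f → φ x ≤ C) :
    limsup (φ ∘ f) l ≤ C := by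
  rw [limsup_le_iff]
  intro b hb
  have htendsto : Tendsto f l (𝓝ˢ {x | φ x ≤ C}) := hK.tendsto_nhdsSet_of_mapClusterPt hf hC
  have hmem : {x | φ x < b} ∈ 𝓝ˢ {x | φ x ≤ C} :=
    (hφ.isOpen_preimage b).mem_nhdsSet.2 fun _ hx => lt_of_le_of_lt hx hb
  exact htendsto hmem

variable {M : Type*} [PseudoEMetricSpace M]

lemma limsup_edist_le_ediam_of_mapClusterPt {f g : ι → M} {K L S : Set M}
    (hK : IsCompact K) (hL : IsCompact L) (hf : ∀ᶠ i in l, f i ∈ K) (hg : ∀ᶠ i in l, g i ∈ L)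
    (hfS : ∀ x, MapClusterPt x l f → x ∈ S) (hgS : ∀ y, MapClusterPt y l g → y ∈ S) :
    limsup (fun i => edist (f i) (g i)) l ≤ Metric.ediam S :=
  limsup_comp_le_of_mapClusterPt continuous_edist.upperSemicontinuous
    (f := fun i => (f i, g i)) (hK.prod hL) (hf.and hg) fun _ _ hxy =>
      Metric.edist_le_ediam_of_mem (hfS _ (hxy.continuousAt_comp continuousAt_fst))
        (hgS _ (hxy.continuousAt_comp continuousAt_snd))

lemma edist_le_limsup_of_mapClusterPt {κ : Type*} {l' : Filter κ} {f : ι → M} {g : κ → M}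
    {x y : M} (hx : MapClusterPt x l f) (hy : MapClusterPt y l' g) :
    edist x y ≤ limsup (fun p : ι × κ => edist (f p.1) (g p.2)) (l ×ˢ l') :=
  ((hx.prodMap hy).continuousAt_comp continuous_edist.continuousAt).le_limsup

end ClusterPoints

section OmegaLimit

variable {M : Type*} [PseudoMetricSpace M] {ω : ℝ → M} {S : Set M}

lemma mem_omegaLim_iff_mapClusterPt {u : M} : u ∈ omegaLim ω ↔ MapClusterPt u atTop ω := by
  constructor
  · rintro ⟨t, ht, hu⟩
    exact hu.mapClusterPt.of_comp ht
  · intro hu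
    obtain ⟨t, htu, ht⟩ := hu.exists_seq_tendsto
    exact ⟨t, ht, htu⟩

lemma isClosed_omegaLim (ω : ℝ → M) : IsClosed (omegaLim ω) := by
  have homega : omegaLim ω = {u | ClusterPt u (map ω atTop)} :=
    Set.ext fun _ => mem_omegaLim_iff_mapClusterPt
  exact homega ▸ isClosed_setOfPred_clusterPt

lemma omegaLim_subset_singleton_of_tendsto {M : Type*} [MetricSpace M] {ω : ℝ → M} {u : M}
    (hω : Tendsto ω atTop (𝓝 u)) : omegaLim ω ⊆ {u} := by
  rintro v ⟨t, ht, hv⟩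
  exact tendsto_nhds_unique hv (hω.comp ht)

lemma ediam_omegaLim_le_aa (ω : ℝ → M) : Metric.ediam (omegaLim ω) ≤ aa ω :=
  Metric.ediam_le fun _ hu _ hv =>
    edist_le_limsup_of_mapClusterPt (mem_omegaLim_iff_mapClusterPt.1 hu)
      (mem_omegaLim_iff_mapClusterPt.1 hv)

lemma convTo.omegaLim_subset_closure (hω : convTo ω S) : omegaLim ω ⊆ closure S := by
  intro u hu
  rw [Metric.closure_eq_iInter_cthickening]
  refine Set.mem_iInter₂.2 fun ε hε => ?_
  obtain ⟨T, -, hT⟩ := hω ε hε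
  have hmem : ∀ᶠ t in atTop, ω t ∈ Metric.cthickening ε S := by
    filter_upwards [eventually_ge_atTop T] with t ht
    obtain ⟨v, hv, hdist⟩ := hT t ht
    exact Metric.mem_cthickening_of_dist_le _ v ε S hv hdist
  exact Metric.isClosed_cthickening.mem_of_mapClusterPt (mem_omegaLim_iff_mapClusterPt.1 hu) hmem

lemma convTo.omegaLim_subset (hω : convTo ω S) (hS : IsClosed S) : omegaLim ω ⊆ S :=
  hω.omegaLim_subset_closure.trans hS.closure_subset

lemma convTo.isCompact_omegaLim (hω : convTo ω S) (hS : IsCompact S) : IsCompact (omegaLim ω) :=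
  hS.closure.of_isClosed_subset (isClosed_omegaLim ω) hω.omegaLim_subset_closure

lemma convTo_of_tendsto_nhdsSet (hω : Tendsto ω atTop (𝓝ˢ S)) : convTo ω S := by
  intro ε hε
  obtain ⟨T, hT₀, hT⟩ := (atTop_basis' 0).eventually_iff.1
    (hω (Metric.thickening_mem_nhdsSet S hε))
  refine ⟨T, hT₀, fun t ht => ?_⟩
  obtain ⟨u, hu, hdist⟩ := Metric.mem_thickening_iff.1 (hT ht)
  exact ⟨u, hu, hdist.le⟩

end OmegaLimit

namespace Precomp

lemma exists_isCompact_eventually_mem {X : Type*} [TopologicalSpace X] {ω : ℝ → X}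
    (hω : Precomp ω) : ∃ K : Set X, IsCompact K ∧ ∀ᶠ t in atTop, ω t ∈ K := by
  obtain ⟨K, hK, hmem⟩ := hω
  exact ⟨K, hK, (eventually_ge_atTop 0).mono hmem⟩

variable {M : Type*} [PseudoMetricSpace M] {ω ω₁ ω₂ : ℝ → M} {S : Set M}

lemma convTo_of_omegaLim_subset (hω : Precomp ω) (hS : omegaLim ω ⊆ S) : convTo ω S := by
  obtain ⟨K, hK, hmem⟩ := hω.exists_isCompact_eventually_mem
  exact convTo_of_tendsto_nhdsSet <| hK.tendsto_nhdsSet_of_mapClusterPt hmem fun _ _ hu =>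
    hS (mem_omegaLim_iff_mapClusterPt.2 hu)

lemma limsup_edist_le_ediam (hω₁ : Precomp ω₁) (hω₂ : Precomp ω₂)
    (hS₁ : omegaLim ω₁ ⊆ S) (hS₂ : omegaLim ω₂ ⊆ S) :
    limsup (fun t => edist (ω₁ t) (ω₂ t)) atTop ≤ Metric.ediam S := by
  obtain ⟨K, hK, hmemK⟩ := hω₁.exists_isCompact_eventually_mem
  obtain ⟨L, hL, hmemL⟩ := hω₂.exists_isCompact_eventually_mem
  exact limsup_edist_le_ediam_of_mapClusterPt hK hL hmemK hmemL
    (fun _ hx => hS₁ (mem_omegaLim_iff_mapClusterPt.2 hx))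
    fun _ hy => hS₂ (mem_omegaLim_iff_mapClusterPt.2 hy)

lemma aa_le_ediam_omegaLim (hω : Precomp ω) : aa ω ≤ Metric.ediam (omegaLim ω) := by
  obtain ⟨K, hK, hmem⟩ := hω.exists_isCompact_eventually_mem
  exact limsup_edist_le_ediam_of_mapClusterPt hK hK (tendsto_fst.eventually hmem)
    (tendsto_snd.eventually hmem)
    (fun _ hx => mem_omegaLim_iff_mapClusterPt.2 (.of_comp tendsto_fst hx))
    fun _ hy => mem_omegaLim_iff_mapClusterPt.2 (.of_comp tendsto_snd hy)

end Precomp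

section Gain

lemma extK_coe (γ : ℝ≥0 → ℝ≥0) (x : ℝ≥0) : extK γ x = γ x := by
  simp [extK]

variable {γ : ℝ≥0 → ℝ≥0}

lemma monotone_extK (hγ : Monotone γ) : Monotone (extK γ) := by
  intro x y hxy
  induction y using ENNReal.recTopCoe with
  | top => simp [extK]
  | coe y =>
    lift x to ℝ≥0 using ne_top_of_le_ne_top ENNReal.coe_ne_top hxy
    simpa only [extK_coe, ENNReal.coe_le_coe] using hγ (ENNReal.coe_le_coe.1 hxy)

variable {𝒰 𝒴 : Type*} [PseudoMetricSpace 𝒰] [PseudoMetricSpace 𝒴] {ω : ℝ → 𝒰} {η : ℝ → 𝒴}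

lemma Precomp.aa_le_extK_aa (hη : Precomp η) (hγ : Monotone γ)
    (hdiam : Metric.ediam (omegaLim η) ≤ extK γ (Metric.ediam (omegaLim ω))) :
    aa η ≤ extK γ (aa ω) :=
  calc aa η ≤ Metric.ediam (omegaLim η) := hη.aa_le_ediam_omegaLim
    _ ≤ extK γ (Metric.ediam (omegaLim ω)) := hdiam
    _ ≤ extK γ (aa ω) := monotone_extK hγ (ediam_omegaLim_le_aa ω)

end Gain

theorem stmt12_general {𝒰 𝒴 : Type*} [MetricSpace 𝒰] [PseudoMetricSpace 𝒴]
    (R : Set ((ℝ → 𝒰) × (ℝ → 𝒴))) (U₀ : Set 𝒰) (hU₀ : IsCompact U₀)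
    (γ : ℝ≥0 → ℝ≥0) (hγ : Monotone γ) (Γ : Set 𝒰 → Set 𝒴)
    (ha : ∀ p ∈ R, omegaLim p.1 ⊆ U₀ → Precomp p.2)
    (hb : ∀ U : Set 𝒰, IsCompact U → U ⊆ U₀ →
      ∀ p ∈ R, omegaLim p.1 ⊆ U → omegaLim p.2 ⊆ Γ U)
    (hc : ∀ U : Set 𝒰, IsCompact U → U ⊆ U₀ →
      Metric.ediam (Γ U) ≤ extK γ (Metric.ediam U)) :
    CauchyGainOn R γ U₀ ∧ IncGainOn R γ U₀ ∧
    (∀ U : Set 𝒰, IsCompact U → U ⊆ U₀ → ∀ p ∈ R, convTo p.1 U →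
      convTo p.2 (Γ (omegaLim p.1)) ∧ convTo p.2 (Γ U)) := by
  refine ⟨fun p hp hω => ?_, fun p₁ hp₁ p₂ hp₂ u₁ u₂ hu₁ hu₂ h₁ h₂ => ?_,
    fun U hU hUU₀ p hp hω => ?_⟩
  · have hsub := hω.omegaLim_subset hU₀.isClosed
    have hcomp := hω.isCompact_omegaLim hU₀
    exact (ha p hp hsub).aa_le_extK_aa hγ <|
      (Metric.ediam_mono (hb _ hcomp hsub p hp subset_rfl)).trans (hc _ hcomp hsub)
  · have hpair : {u₁, u₂} ⊆ U₀ := Set.pair_subset hu₁ hu₂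
    have hcomp : IsCompact {u₁, u₂} := (Set.toFinite _).isCompact
    have hΩ₁ : omegaLim p₁.1 ⊆ {u₁, u₂} :=
      (omegaLim_subset_singleton_of_tendsto h₁).trans (by simp)
    have hΩ₂ : omegaLim p₂.1 ⊆ {u₁, u₂} :=
      (omegaLim_subset_singleton_of_tendsto h₂).trans (by simp)
    calc limsup (fun t => edist (p₁.2 t) (p₂.2 t)) atTop
        ≤ Metric.ediam (Γ {u₁, u₂}) :=
          (ha p₁ hp₁ (hΩ₁.trans hpair)).limsup_edist_le_ediam (ha p₂ hp₂ (hΩ₂.trans hpair))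
            (hb _ hcomp hpair p₁ hp₁ hΩ₁) (hb _ hcomp hpair p₂ hp₂ hΩ₂)
      _ ≤ extK γ (Metric.ediam {u₁, u₂}) := hc _ hcomp hpair
      _ = γ (nndist u₁ u₂) := by rw [Metric.ediam_pair, edist_nndist, extK_coe]
  · have hsub := hω.omegaLim_subset hU.isClosed
    have hcomp := hω.isCompact_omegaLim hU
    have hη : Precomp p.2 := ha p hp (hsub.trans hUU₀)
    exact ⟨hη.convTo_of_omegaLim_subset (hb _ hcomp (hsub.trans hUU₀) p hp subset_rfl),
      hη.convTo_of_omegaLim_subset (hb U hU hUU₀ p hp hsub)⟩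

/-- Lemma 2.1: the sufficient condition via `Γ` yields Cauchy and
incremental limit gains on `U₀`, together with the attractivity conclusions. -/
theorem stmt12 {𝒰 𝒴 : Type*} [MetricSpace 𝒰] [MetricSpace 𝒴]
    (R : Set ((ℝ → 𝒰) × (ℝ → 𝒴))) (U₀ : Set 𝒰) (hU₀ : IsCompact U₀)
    (γ : ℝ≥0 → ℝ≥0) (hγ : KInfty γ) (Γ : Set 𝒰 → Set 𝒴)
    (ha : ∀ p ∈ R, omegaLim p.1 ⊆ U₀ → Precomp p.2)
    (hb : ∀ U : Set 𝒰, IsCompact U → U ⊆ U₀ →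
      ∀ p ∈ R, omegaLim p.1 ⊆ U → omegaLim p.2 ⊆ Γ U)
    (hc : ∀ U : Set 𝒰, IsCompact U → U ⊆ U₀ →
      EMetric.diam (Γ U) ≤ extK γ (EMetric.diam U)) :
    CauchyGainOn R γ U₀ ∧ IncGainOn R γ U₀ ∧
    (∀ U : Set 𝒰, IsCompact U → U ⊆ U₀ → ∀ p ∈ R, convTo p.1 U →
      convTo p.2 (Γ (omegaLim p.1)) ∧
      ((∀ U₁ U₂ : Set 𝒰, U₁ ⊆ U₂ → Γ U₁ ⊆ Γ U₂) → convTo p.2 (Γ U))) := by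
  obtain ⟨hcauchy, hinc, hconv⟩ := stmt12_general R U₀ hU₀ γ hγ.2.1.monotone Γ ha hb hc
  exact ⟨hcauchy, hinc, fun U hU hUU₀ p hp hω => (hconv U hU hUU₀ p hp hω).imp_right fun h _ => h⟩
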